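/- arXiv:2410.20093 — 2 statements merged into one kernel-verified Lean document; each statement's English description precedes it below -/
import Mathlib

section
/- Let f : ℝ → ℂ be Lipschitz with f(±∞) = 0 and |f'(p)| ≤ C (1+|p|)^{-(1+ε)} for some 0 < ε < 1. Then the inverse Fourier transform of f (a priori a tempered distribution) is represented by a function V that is continuous on ℝ \ {0} and satisfies |V(r)| ≤ C' |r|^{ε-1} for all r ≠ 0. -/
open Filter Real Topology MeasureTheory

/-!
Integrating by parts, the inverse Fourier transform of `f` away from the origin is
`V r = i / (2 π r) * ∫ exp (i p r) f'(p) dp`. As `f` vanishes at both ends, `∫ f' = 0`, so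
`exp (i p r)` may be replaced by `exp (i p r) - 1`, which is at most `min 2 |p r|`. With
`|f'(p)| ≤ C |p| ^ (-(1 + ε))` and the substitution `u = p r`, the integral is at most
`C |r| ^ ε ∫ |u| ^ (-(1 + ε)) min 2 |u| du`, and this converges because `0 < ε < 1`.

To pair `V` with a Schwartz function `ψ`, the factor `1 / r` is moved onto `ψ`. The singular
function `φ r = ψ r / r` still has a compensated Fourier integral `∫ (exp (i p r) - 1) φ(r) dr`,
whose derivative in `p` is `i` times the Fourier integral of `ψ`. Fubini's theorem moves the
compensated integral from `f'` to `φ`, and integration by parts against `f` concludes.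
-/

section Primitive

variable {E : Type*} [NormedAddCommGroup E] [NormedSpace ℝ E] {f g : ℝ → E}

theorem setIntegral_Iic_eq_of_tendsto_atBot (hfg : ∀ a b, ∫ p in a..b, g p = f b - f a)
    (hg : Integrable g) (hbot : Tendsto f atBot (𝓝 0)) (p : ℝ) : ∫ q in Set.Iic p, g q = f p :=
  tendsto_nhds_unique (intervalIntegral_tendsto_integral_Iic p hg.integrableOn tendsto_id) <| by
    simpa only [hfg, sub_zero, id] using hbot.const_sub (f p)

theorem integral_eq_zero_of_tendsto_zero (hfg : ∀ a b, ∫ p in a..b, g p = f b - f a)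
    (hg : Integrable g) (htop : Tendsto f atTop (𝓝 0)) (hbot : Tendsto f atBot (𝓝 0)) :
    ∫ p, g p = 0 :=
  tendsto_nhds_unique
    (intervalIntegral_tendsto_integral hg tendsto_neg_atTop_atBot tendsto_id) <| by
    simpa only [hfg, sub_zero, id, Function.comp_apply] using
      htop.sub (hbot.comp tendsto_neg_atTop_atBot)

variable [CompleteSpace E]

theorem intervalIntegral_deriv_eq_sub_of_lipschitzWith {L : NNReal} (hf : LipschitzWith L f)
    (hdiff : ∀ᵐ p, DifferentiableAt ℝ f p) (a b : ℝ) : ∫ p in a..b, deriv f p = f b - f a := by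
  -- The real-valued case, tested against every continuous linear functional.
  refine (SeparatingDual.eq_iff_forall_dual_eq (R := ℝ)).mpr fun ℓ => ?_
  have hint : IntervalIntegrable (deriv f) volume a b :=
    intervalIntegrable_const.mono_fun' (aestronglyMeasurable_deriv f _)
      (.of_forall fun _ => norm_deriv_le_of_lipschitz hf)
  have hderiv : ∀ᵐ p, ℓ (deriv f p) = deriv (ℓ ∘ f) p := by
    filter_upwards [hdiff] with p hp
    exact (ℓ.hasFDerivAt.comp_hasDerivAt p hp.hasDerivAt).deriv.symm
  calc ℓ (∫ p in a..b, deriv f p) = ∫ p in a..b, ℓ (deriv f p) :=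
        (ℓ.intervalIntegral_comp_comm hint).symm
    _ = ∫ p in a..b, deriv (ℓ ∘ f) p :=
        intervalIntegral.integral_congr_ae (hderiv.mono fun _ hp _ => hp)
    _ = ℓ (f b) - ℓ (f a) :=
        (ℓ.lipschitz.comp hf).lipschitzOnWith.absolutelyContinuousOnInterval.integral_deriv_eq_sub
    _ = ℓ (f b - f a) := (map_sub ℓ _ _).symm

theorem integral_deriv_smul_eq_neg_integral_smul {𝕜 : Type*} [RCLike 𝕜] [NormedSpace 𝕜 E]
    {h h' : ℝ → 𝕜} (hh : ∀ p, HasDerivAt h (h' p) p) (hh' : Integrable h')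
    (hfg : ∀ a b, ∫ p in a..b, g p = f b - f a) (hg : Integrable g)
    (htop : Tendsto f atTop (𝓝 0)) (hbot : Tendsto f atBot (𝓝 0)) :
    ∫ p, h' p • f p = -∫ p, h p • g p := by
  obtain ⟨c, hc⟩ : ∃ c, Tendsto h atTop (𝓝 c) :=
    ⟨_, tendsto_limUnder_of_hasDerivAt_of_integrableOn_Ioi (a := 0) (fun p _ => hh p)
      hh'.integrableOn⟩
  let F : ℝ × ℝ → E := {z | z.2 ≤ z.1}.indicator fun z => h' z.1 • g z.2
  have hF : Integrable F (volume.prod volume) :=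
    (hh'.smul_prod hg).indicator (measurableSet_le measurable_snd measurable_fst)
  have hF_left (p : ℝ) : ∫ q, F (p, q) = h' p • f p := by
    rw [← setIntegral_Iic_eq_of_tendsto_atBot hfg hg hbot p, ← integral_smul,
      ← integral_indicator measurableSet_Iic]
    rfl
  have hF_right (q : ℝ) : ∫ p, F (p, q) = (c - h q) • g q := by
    rw [← integral_Ioi_of_hasDerivAt_of_tendsto' (fun p _ => hh p) hh'.integrableOn hc,
      ← integral_Ici_eq_integral_Ioi, ← integral_smul_const, ← integral_indicator measurableSet_Ici]
    rfl
  have hint : Integrable fun q => (c - h q) • g q := by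
    simpa only [hF_right] using hF.integral_prod_right
  calc ∫ p, h' p • f p = ∫ q, (c - h q) • g q := by
        simpa only [hF_left, hF_right] using
          integral_integral_swap (f := fun p q => F (p, q)) hF
    _ = ∫ q, ((c - h q) • g q - c • g q) := by
        rw [integral_sub hint (hg.fun_smul c), integral_smul,
          integral_eq_zero_of_tendsto_zero hfg hg htop hbot, smul_zero, sub_zero]
    _ = -∫ q, h q • g q := by
        rw [← integral_neg]
        simp only [sub_smul, sub_sub_cancel_left]

end Primitive

section Kernel

theorem norm_exp_I_mul_mul_sub_one_le (p r : ℝ) :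
    ‖Complex.exp (Complex.I * p * r) - 1‖ ≤ min 2 |p * r| := by
  rw [mul_assoc, ← Complex.ofReal_mul]
  refine le_min ?_ Real.norm_exp_I_mul_ofReal_sub_one_le
  calc ‖Complex.exp (Complex.I * ↑(p * r)) - 1‖
      ≤ ‖Complex.exp (Complex.I * ↑(p * r))‖ + ‖(1 : ℂ)‖ := norm_sub_le _ _
    _ = 2 := by rw [Complex.norm_exp_I_mul_ofReal, norm_one, one_add_one_eq_two]

theorem locallyIntegrable_abs_rpow {a : ℝ} (ha : -1 < a) :
    LocallyIntegrable fun u : ℝ => |u| ^ a := by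
  refine locallyIntegrable_of_norm_le_rpow (C := 1) (α := -a) (by simp) ?_ (.of_forall fun u => ?_)
    (by fun_prop : Measurable fun u : ℝ => |u| ^ a).aestronglyMeasurable
  · simpa using neg_lt.mp ha
  · rw [neg_neg, one_mul, Real.norm_of_nonneg (by positivity), Real.norm_eq_abs]

/-- The dominating function `|u| ^ (-(1 + ε)) * min 2 |u|` of `|u| ^ (-(1 + ε)) * |exp (i u) - 1|`;
its integral is the constant in the bound for the oscillatory integral of a function of decay
`|p| ^ (-(1 + ε))`. -/
noncomputable def oscillationKernel (ε u : ℝ) : ℝ := |u| ^ (-(1 + ε)) * min 2 |u|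

variable {ε : ℝ}

theorem oscillationKernel_nonneg (u : ℝ) : 0 ≤ oscillationKernel ε u := by
  unfold oscillationKernel; positivity

theorem locallyIntegrable_oscillationKernel (hε : ε < 1) :
    LocallyIntegrable (oscillationKernel ε) := by
  have hmeas : Measurable (oscillationKernel ε) := by unfold oscillationKernel; fun_prop
  refine (locallyIntegrable_abs_rpow (neg_lt_neg hε)).mono hmeas.aestronglyMeasurable ?_
  filter_upwards [Measure.ae_ne volume 0] with u hu
  rw [Real.norm_of_nonneg (oscillationKernel_nonneg u), Real.norm_of_nonneg (by positivity)]
  calc |u| ^ (-(1 + ε)) * min 2 |u| ≤ |u| ^ (-(1 + ε)) * |u| := by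
        gcongr; exact min_le_right _ _
    _ = |u| ^ (-ε) := by
        rw [← Real.rpow_add_one (abs_ne_zero.mpr hu)]; congr 1; ring

theorem integrable_oscillationKernel (hε0 : 0 < ε) (hε1 : ε < 1) :
    Integrable (oscillationKernel ε) := by
  refine (locallyIntegrable_oscillationKernel hε1).integrable_of_isBigO_atTop_of_norm_isNegInvariant
    (.of_forall fun u => ?_) ?_
    (integrableAtFilter_rpow_atTop_iff (s := -(1 + ε)).mpr (by linarith))
  · simp only [Function.comp_apply, oscillationKernel, abs_neg]
  · refine Asymptotics.IsBigO.of_bound 2 ?_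
    filter_upwards [eventually_ge_atTop 0] with u hu
    rw [Real.norm_of_nonneg (oscillationKernel_nonneg u), Real.norm_of_nonneg (by positivity),
      oscillationKernel, abs_of_nonneg hu, mul_comm]
    gcongr
    exact min_le_left _ _

theorem rpow_mul_oscillationKernel_mul {r : ℝ} (hr : r ≠ 0) (p : ℝ) :
    |r| ^ (1 + ε) * oscillationKernel ε (p * r) = |p| ^ (-(1 + ε)) * min 2 |p * r| := by
  have : |r| ^ (1 + ε) ≠ 0 := by positivity
  rw [oscillationKernel, abs_mul, Real.mul_rpow (by positivity) (by positivity),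
    Real.rpow_neg (abs_nonneg r)]
  field_simp

theorem integrable_rpow_mul_oscillationKernel_mul (hε0 : 0 < ε) (hε1 : ε < 1) {r : ℝ}
    (hr : r ≠ 0) : Integrable fun p => |r| ^ (1 + ε) * oscillationKernel ε (p * r) :=
  ((integrable_oscillationKernel hε0 hε1).comp_mul_right' hr).const_mul _

theorem integral_rpow_mul_oscillationKernel_mul {r : ℝ} (hr : r ≠ 0) :
    ∫ p, |r| ^ (1 + ε) * oscillationKernel ε (p * r) =
      |r| ^ ε * ∫ u, oscillationKernel ε u := by
  have : |r| ≠ 0 := abs_ne_zero.mpr hr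
  rw [integral_const_mul, Measure.integral_comp_mul_right, smul_eq_mul, abs_inv,
    Real.rpow_add (by positivity), Real.rpow_one]
  field_simp

theorem integrable_abs_rpow_mul_norm {F : Type*} [NormedAddCommGroup F] {a : ℝ} (ha : -1 < a)
    (ha0 : a ≤ 0) {ψ : ℝ → F} (hψc : Continuous ψ) (hψ : Integrable ψ) :
    Integrable fun r => |r| ^ a * ‖ψ r‖ := by
  refine ((locallyIntegrable_abs_rpow ha).smul_continuous hψc.norm).integrable_of_isBigO_cocompact
    (g := ψ) ?_ (hψ.integrableAtFilter _)
  refine Asymptotics.IsBigO.of_bound 1 ?_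
  filter_upwards [(isCompact_Icc (a := (-1 : ℝ)) (b := 1)).compl_mem_cocompact] with r hr
  have hr : 1 ≤ |r| := le_of_not_ge fun h => hr (abs_le.mp h)
  rw [smul_eq_mul, norm_mul, norm_norm, Real.norm_of_nonneg (by positivity)]
  gcongr
  exact Real.rpow_le_one_of_one_le_of_nonpos hr ha0

end Kernel

section CompensatedFourierIntegral

variable {E : Type*} [NormedAddCommGroup E] [NormedSpace ℂ E] {g : ℝ → E} {C ε : ℝ}

/-- The Fourier integral `∫ exp (i p r) g(p) dp` with its value at `r = 0` subtracted. It agrees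
with the Fourier integral when `∫ g = 0`, which is the case for the derivative of a function
vanishing at both ends, and the subtraction lets the decay of `g` control it near `r = 0`. It also
converges when `g` has a singularity `1 / p` at the origin. -/
noncomputable def compensatedFourierIntegral (g : ℝ → E) (r : ℝ) : E :=
  ∫ p : ℝ, (Complex.exp (Complex.I * p * r) - 1) • g p

theorem aestronglyMeasurable_exp_sub_one_smul (hg : AEStronglyMeasurable g) (r : ℝ) :
    AEStronglyMeasurable fun p : ℝ => (Complex.exp (Complex.I * p * r) - 1) • g p :=
  (by fun_prop : Continuous fun p : ℝ =>
    Complex.exp (Complex.I * p * r) - 1).aestronglyMeasurable.smul hg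

theorem continuous_compensatedFourierIntegral (hg : Integrable g) :
    Continuous (compensatedFourierIntegral g) := by
  refine continuous_of_dominated (bound := fun p => 2 * ‖g p‖)
    (aestronglyMeasurable_exp_sub_one_smul hg.aestronglyMeasurable)
    (fun r => .of_forall fun p => ?_) (hg.norm.const_mul 2) (.of_forall fun p => by fun_prop)
  rw [norm_smul]
  gcongr
  exact (norm_exp_I_mul_mul_sub_one_le p r).trans (min_le_left _ _)

theorem hasDerivAt_compensatedFourierIntegral (hg : AEStronglyMeasurable g)
    (hg' : Integrable fun p : ℝ => (p : ℂ) • g p) (r : ℝ) :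
    HasDerivAt (compensatedFourierIntegral g)
      (Complex.I • ∫ p : ℝ, Complex.exp (Complex.I * p * r) • (p : ℂ) • g p) r := by
  have hint : Integrable fun p : ℝ => (Complex.exp (Complex.I * p * r) - 1) • g p := by
    refine (hg'.norm.const_mul |r|).mono' (aestronglyMeasurable_exp_sub_one_smul hg r)
      (.of_forall fun p => ?_)
    calc ‖(Complex.exp (Complex.I * p * r) - 1) • g p‖ ≤ |p * r| * ‖g p‖ := by
          rw [norm_smul]
          gcongr
          exact (norm_exp_I_mul_mul_sub_one_le p r).trans (min_le_right _ _)
      _ = |r| * ‖(p : ℂ) • g p‖ := by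
          rw [norm_smul, Complex.norm_real, Real.norm_eq_abs, abs_mul]; ring
  have hderiv (p s : ℝ) : HasDerivAt (fun s : ℝ => (Complex.exp (Complex.I * p * s) - 1) • g p)
      (Complex.I • Complex.exp (Complex.I * p * s) • (p : ℂ) • g p) s := by
    have hlin : HasDerivAt (fun s : ℝ => Complex.I * p * s) (Complex.I * p) s := by
      simpa using (hasDerivAt_id s).ofReal_comp.const_mul (Complex.I * p)
    convert (hlin.cexp.sub_const 1).smul_const (g p) using 1
    simp only [smul_smul]
    congr 1
    ring
  have hbound (p s : ℝ) :
      ‖Complex.I • Complex.exp (Complex.I * p * s) • (p : ℂ) • g p‖ ≤ ‖(p : ℂ) • g p‖ := by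
    rw [norm_smul, norm_smul, Complex.norm_I, mul_assoc Complex.I, ← Complex.ofReal_mul,
      Complex.norm_exp_I_mul_ofReal, one_mul, one_mul]
  have hmeas : AEStronglyMeasurable fun p : ℝ =>
      Complex.I • Complex.exp (Complex.I * p * r) • (p : ℂ) • g p :=
    ((by fun_prop : Continuous fun p : ℝ =>
      Complex.exp (Complex.I * p * r)).aestronglyMeasurable.smul
        hg'.aestronglyMeasurable).const_smul Complex.I
  rw [← integral_smul]
  exact (hasDerivAt_integral_of_dominated_loc_of_deriv_le (𝕜 := ℝ) univ_mem
    (.of_forall (aestronglyMeasurable_exp_sub_one_smul hg)) hint hmeas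
    (.of_forall fun p s _ => hbound p s) hg'.norm (.of_forall fun p s _ => hderiv p s)).2

theorem hasDerivAt_compensatedFourierIntegral_inv_smul (hg : Integrable g) (p : ℝ) :
    HasDerivAt (compensatedFourierIntegral fun r => (r : ℂ)⁻¹ • g r)
      (Complex.I • ∫ r : ℝ, Complex.exp (Complex.I * p * r) • g r) p := by
  have hcancel : ∀ᵐ r : ℝ, (r : ℂ) • (r : ℂ)⁻¹ • g r = g r := by
    filter_upwards [volume.ae_ne 0] with r hr
    exact smul_inv_smul₀ (Complex.ofReal_ne_zero.mpr hr) _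
  have hmeas : AEStronglyMeasurable fun r : ℝ => (r : ℂ)⁻¹ • g r :=
    (by fun_prop : Measurable fun r : ℝ => (r : ℂ)⁻¹).aestronglyMeasurable.smul
      hg.aestronglyMeasurable
  have hint : ∫ r : ℝ, Complex.exp (Complex.I * r * p) • (r : ℂ) • (r : ℂ)⁻¹ • g r =
      ∫ r : ℝ, Complex.exp (Complex.I * p * r) • g r := by
    refine integral_congr_ae (hcancel.mono fun r hr => ?_)
    simp only [hr, mul_right_comm Complex.I (r : ℂ)]
  rw [← hint]
  exact hasDerivAt_compensatedFourierIntegral hmeas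
    (hg.congr (hcancel.mono fun _ => Eq.symm)) p

theorem norm_exp_sub_one_smul_le (hgC : ∀ᵐ p, ‖g p‖ ≤ C * |p| ^ (-(1 + ε))) {r : ℝ} (hr : r ≠ 0) :
    ∀ᵐ p : ℝ, ‖(Complex.exp (Complex.I * p * r) - 1) • g p‖ ≤
      C * (|r| ^ (1 + ε) * oscillationKernel ε (p * r)) := by
  filter_upwards [hgC] with p hp
  calc ‖(Complex.exp (Complex.I * p * r) - 1) • g p‖
      ≤ min 2 |p * r| * (C * |p| ^ (-(1 + ε))) := by
        rw [norm_smul]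
        gcongr
        exact norm_exp_I_mul_mul_sub_one_le p r
    _ = C * (|r| ^ (1 + ε) * oscillationKernel ε (p * r)) := by
        rw [rpow_mul_oscillationKernel_mul hr]; ring

theorem integrable_exp_sub_one_smul (hε0 : 0 < ε) (hε1 : ε < 1) (hg : AEStronglyMeasurable g)
    (hgC : ∀ᵐ p, ‖g p‖ ≤ C * |p| ^ (-(1 + ε))) {r : ℝ} (hr : r ≠ 0) :
    Integrable fun p : ℝ => (Complex.exp (Complex.I * p * r) - 1) • g p :=
  ((integrable_rpow_mul_oscillationKernel_mul hε0 hε1 hr).const_mul C).mono'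
    (aestronglyMeasurable_exp_sub_one_smul hg r) (norm_exp_sub_one_smul_le hgC hr)

theorem integral_norm_exp_sub_one_smul_le (hε0 : 0 < ε) (hε1 : ε < 1)
    (hgC : ∀ᵐ p, ‖g p‖ ≤ C * |p| ^ (-(1 + ε))) {r : ℝ} (hr : r ≠ 0) :
    ∫ p : ℝ, ‖(Complex.exp (Complex.I * p * r) - 1) • g p‖ ≤
      C * (∫ u, oscillationKernel ε u) * |r| ^ ε := by
  calc ∫ p : ℝ, ‖(Complex.exp (Complex.I * p * r) - 1) • g p‖
      ≤ ∫ p, C * (|r| ^ (1 + ε) * oscillationKernel ε (p * r)) :=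
        integral_mono_of_nonneg (.of_forall fun _ => norm_nonneg _)
          ((integrable_rpow_mul_oscillationKernel_mul hε0 hε1 hr).const_mul C)
          (norm_exp_sub_one_smul_le hgC hr)
    _ = C * (∫ u, oscillationKernel ε u) * |r| ^ ε := by
        rw [integral_const_mul, integral_rpow_mul_oscillationKernel_mul hr]; ring

theorem norm_compensatedFourierIntegral_le (hε0 : 0 < ε) (hε1 : ε < 1)
    (hgC : ∀ᵐ p, ‖g p‖ ≤ C * |p| ^ (-(1 + ε))) {r : ℝ} (hr : r ≠ 0) :
    ‖compensatedFourierIntegral g r‖ ≤ C * (∫ u, oscillationKernel ε u) * |r| ^ ε :=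
  (norm_integral_le_integral_norm _).trans (integral_norm_exp_sub_one_smul_le hε0 hε1 hgC hr)

theorem integral_smul_compensatedFourierIntegral [CompleteSpace E] (hε0 : 0 < ε) (hε1 : ε < 1)
    (hg : AEStronglyMeasurable g) (hgC : ∀ᵐ p, ‖g p‖ ≤ C * |p| ^ (-(1 + ε))) {φ : ℝ → ℂ}
    (hφ : AEStronglyMeasurable φ) (hφε : Integrable fun r => |r| ^ ε * ‖φ r‖) :
    ∫ r, φ r • compensatedFourierIntegral g r = ∫ p, compensatedFourierIntegral φ p • g p := by
  let F (p r : ℝ) : E := φ r • (Complex.exp (Complex.I * p * r) - 1) • g p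
  have hFmeas : AEStronglyMeasurable (Function.uncurry F) (volume.prod volume) :=
    hφ.comp_snd.smul ((by fun_prop : Continuous fun z : ℝ × ℝ =>
      Complex.exp (Complex.I * z.1 * z.2) - 1).aestronglyMeasurable.smul hg.comp_fst)
  have hFint : Integrable (Function.uncurry F) (volume.prod volume) := by
    refine (integrable_prod_iff' hFmeas).mpr ⟨?_, ?_⟩
    · filter_upwards [volume.ae_ne 0] with r hr
      exact (integrable_exp_sub_one_smul hε0 hε1 hg hgC hr).smul (φ r)
    · refine (hφε.const_mul (C * ∫ u, oscillationKernel ε u)).mono'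
        hFmeas.norm.prod_swap.integral_prod_right' ?_
      filter_upwards [volume.ae_ne 0] with r hr
      rw [Real.norm_of_nonneg (by positivity)]
      calc ∫ p, ‖F p r‖
          = ‖φ r‖ * ∫ p : ℝ, ‖(Complex.exp (Complex.I * p * r) - 1) • g p‖ := by
            simp only [F, norm_smul (φ r), integral_const_mul]
        _ ≤ ‖φ r‖ * (C * (∫ u, oscillationKernel ε u) * |r| ^ ε) := by
            gcongr
            exact integral_norm_exp_sub_one_smul_le hε0 hε1 hgC hr
        _ = C * (∫ u, oscillationKernel ε u) * (|r| ^ ε * ‖φ r‖) := by ring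
  calc ∫ r, φ r • compensatedFourierIntegral g r = ∫ r, ∫ p, F p r := by
        simp only [F, integral_smul, compensatedFourierIntegral]
    _ = ∫ p, ∫ r, F p r := (integral_integral_swap hFint).symm
    _ = ∫ p, compensatedFourierIntegral φ p • g p := by
        refine integral_congr_ae (.of_forall fun p => ?_)
        simp only [F, compensatedFourierIntegral, smul_smul, integral_smul_const]
        congr 1
        refine integral_congr_ae (.of_forall fun r => ?_)
        simp only [smul_eq_mul, mul_comm (φ r), mul_right_comm Complex.I (p : ℂ)]

end CompensatedFourierIntegral

section InverseFourierOfDeriv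

variable {E : Type*} [NormedAddCommGroup E] [NormedSpace ℂ E] {g : ℝ → E} {C ε : ℝ}

/-- The function `(i / (2 π r)) ∫ (exp (i p r) - 1) g(p) dp`, which represents the inverse Fourier
transform of `f` when `g` is the derivative of `f`; its value at `r = 0` is `0`. -/
noncomputable def inverseFourierOfDeriv (g : ℝ → E) (r : ℝ) : E :=
  (Complex.I / (2 * π * r)) • compensatedFourierIntegral g r

theorem continuousOn_inverseFourierOfDeriv (hg : Integrable g) :
    ContinuousOn (inverseFourierOfDeriv g) {0}ᶜ := by
  refine ContinuousOn.smul (continuousOn_const.div (by fun_prop) fun r hr => ?_)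
    (continuous_compensatedFourierIntegral hg).continuousOn
  exact mul_ne_zero (by exact_mod_cast Real.two_pi_pos.ne') (Complex.ofReal_ne_zero.mpr hr)

theorem norm_inverseFourierOfDeriv_le (hε0 : 0 < ε) (hε1 : ε < 1)
    (hgC : ∀ᵐ p, ‖g p‖ ≤ C * |p| ^ (-(1 + ε))) {r : ℝ} (hr : r ≠ 0) :
    ‖inverseFourierOfDeriv g r‖ ≤
      C * (∫ u, oscillationKernel ε u) / (2 * π) * |r| ^ (ε - 1) := by
  have hr' : |r| ≠ 0 := abs_ne_zero.mpr hr
  have hnorm : ‖Complex.I / (2 * π * r)‖ = (2 * π * |r|)⁻¹ := by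
    simp [abs_of_pos Real.pi_pos]
  calc ‖inverseFourierOfDeriv g r‖
      ≤ (2 * π * |r|)⁻¹ * (C * (∫ u, oscillationKernel ε u) * |r| ^ ε) := by
        rw [inverseFourierOfDeriv, norm_smul, hnorm]
        gcongr
        exact norm_compensatedFourierIntegral_le hε0 hε1 hgC hr
    _ = C * (∫ u, oscillationKernel ε u) / (2 * π) * |r| ^ (ε - 1) := by
        rw [Real.rpow_sub_one hr']
        field_simp

theorem locallyIntegrable_inverseFourierOfDeriv (hε0 : 0 < ε) (hε1 : ε < 1) (hg : Integrable g)
    (hgC : ∀ᵐ p, ‖g p‖ ≤ C * |p| ^ (-(1 + ε))) :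
    LocallyIntegrable (inverseFourierOfDeriv g) := by
  refine locallyIntegrable_of_norm_le_rpow (C := C * (∫ u, oscillationKernel ε u) / (2 * π))
    (α := 1 - ε) (by simp) (by simpa using hε0) ?_ ?_
  · filter_upwards [volume.ae_ne 0] with r hr
    rw [neg_sub, Real.norm_eq_abs]
    exact norm_inverseFourierOfDeriv_le hε0 hε1 hgC hr
  · exact (by fun_prop : Measurable fun r : ℝ => Complex.I / (2 * π * r)).aestronglyMeasurable.smul
      (continuous_compensatedFourierIntegral hg).aestronglyMeasurable

theorem integrable_integral_exp_mul_schwartzMap (ψ : SchwartzMap ℝ ℂ) :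
    Integrable fun p : ℝ => ∫ r : ℝ, Complex.exp (Complex.I * p * r) * ψ r := by
  have hinv := (FourierTransformInv.fourierInv ψ).integrable (μ := volume)
  convert hinv.comp_mul_right' (inv_ne_zero Real.two_pi_pos.ne') using 2 with p
  rw [SchwartzMap.fourierInv_coe, Real.fourierInv_eq']
  congr 1 with r
  have hphase : Complex.I * p * r = ↑(2 * π * inner ℝ r (p * (2 * π)⁻¹)) * Complex.I := by
    have : (π : ℂ) ≠ 0 := Complex.ofReal_ne_zero.mpr Real.pi_ne_zero
    simp only [mul_inv_rev, RCLike.inner_apply, ringHom_apply, Complex.ofReal_mul,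
      Complex.ofReal_ofNat, Complex.ofReal_inv]
    field_simp
  rw [smul_eq_mul, hphase]

theorem integral_smul_inverseFourierOfDeriv [CompleteSpace E] {f : ℝ → E} (hε0 : 0 < ε)
    (hε1 : ε < 1) (hfg : ∀ a b, ∫ p in a..b, g p = f b - f a) (hg : Integrable g)
    (hgC : ∀ᵐ p, ‖g p‖ ≤ C * |p| ^ (-(1 + ε)))
    (htop : Tendsto f atTop (𝓝 0)) (hbot : Tendsto f atBot (𝓝 0)) (ψ : SchwartzMap ℝ ℂ) :
    ∫ r, ψ r • inverseFourierOfDeriv g r =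
      ∫ p : ℝ, ((2 * π : ℝ)⁻¹ • ∫ r : ℝ, Complex.exp (Complex.I * p * r) * ψ r) • f p := by
  let T (p : ℝ) : ℂ := ∫ r : ℝ, Complex.exp (Complex.I * p * r) * ψ r
  let φ (r : ℝ) : ℂ := (r : ℂ)⁻¹ • ψ r
  have hφ : AEStronglyMeasurable φ :=
    (by fun_prop : Measurable fun r : ℝ => (r : ℂ)⁻¹).aestronglyMeasurable.smul
      ψ.continuous.aestronglyMeasurable
  have hφε : Integrable fun r => |r| ^ ε * ‖φ r‖ := by
    refine (integrable_abs_rpow_mul_norm (a := ε - 1) (by linarith) (by linarith) ψ.continuous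
      ψ.integrable).congr ?_
    filter_upwards [volume.ae_ne 0] with r hr
    rw [Real.rpow_sub_one (abs_ne_zero.mpr hr), norm_smul, norm_inv, Complex.norm_real,
      Real.norm_eq_abs, div_eq_mul_inv, mul_assoc]
  have hderiv (p : ℝ) : HasDerivAt (compensatedFourierIntegral φ) (Complex.I * T p) p :=
    hasDerivAt_compensatedFourierIntegral_inv_smul ψ.integrable p
  have hT : Integrable T := integrable_integral_exp_mul_schwartzMap ψ
  calc ∫ r, ψ r • inverseFourierOfDeriv g r
      = (Complex.I / (2 * π)) • ∫ r, φ r • compensatedFourierIntegral g r := by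
        rw [← integral_smul]
        congr 1 with r
        simp only [inverseFourierOfDeriv, φ, smul_smul, smul_eq_mul]
        congr 1
        ring
    _ = (Complex.I / (2 * π)) • ∫ p, compensatedFourierIntegral φ p • g p := by
        rw [integral_smul_compensatedFourierIntegral hε0 hε1 hg.aestronglyMeasurable hgC hφ hφε]
    _ = (Complex.I / (2 * π)) • -∫ p, (Complex.I * T p) • f p := by
        rw [integral_deriv_smul_eq_neg_integral_smul hderiv (hT.const_mul _) hfg hg htop hbot,
          neg_neg]
    _ = ∫ p, ((2 * π : ℝ)⁻¹ • T p) • f p := by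
        rw [← integral_neg, ← integral_smul]
        congr 1 with p
        rw [← neg_smul, smul_smul, Complex.real_smul]
        congr 1
        push_cast
        linear_combination (-(T p) / (2 * π)) * Complex.I_mul_I

end InverseFourierOfDeriv

section Decay

variable {F : Type*} [NormedAddCommGroup F] {g : ℝ → F} {C ε : ℝ}

theorem integrable_of_norm_le_one_add_abs_rpow (hε0 : 0 < ε) (hg : AEStronglyMeasurable g)
    (hgC : ∀ᵐ p : ℝ, ‖g p‖ ≤ C * (1 + |p|) ^ (-(1 + ε))) : Integrable g := by
  have hdecay : Integrable fun p : ℝ => (1 + |p|) ^ (-(1 + ε)) :=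
    integrable_one_add_norm (by simpa using hε0)
  exact (hdecay.const_mul C).mono' hg hgC

theorem norm_le_abs_rpow_of_norm_le_one_add_abs_rpow (hε0 : 0 < ε)
    (hgC : ∀ᵐ p : ℝ, ‖g p‖ ≤ C * (1 + |p|) ^ (-(1 + ε))) :
    ∀ᵐ p : ℝ, ‖g p‖ ≤ C * |p| ^ (-(1 + ε)) := by
  filter_upwards [hgC, volume.ae_ne 0] with p hp hp0
  have hC : 0 ≤ C := nonneg_of_mul_nonneg_left ((norm_nonneg _).trans hp) (by positivity)
  exact hp.trans <| mul_le_mul_of_nonneg_left (Real.rpow_le_rpow_of_nonpos (abs_pos.mpr hp0)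
    (le_add_of_nonneg_left zero_le_one) (by linarith)) hC

end Decay

theorem stmt3_general {E : Type*} [NormedAddCommGroup E] [NormedSpace ℂ E] [CompleteSpace E]
    {f : ℝ → E} {L : NNReal} {C ε : ℝ} (hε0 : 0 < ε) (hε1 : ε < 1) (hlip : LipschitzWith L f)
    (hdiff : ∀ᵐ p, DifferentiableAt ℝ f p)
    (htop : Tendsto f atTop (𝓝 0)) (hbot : Tendsto f atBot (𝓝 0))
    (hder : ∀ᵐ p : ℝ, ‖deriv f p‖ ≤ C * (1 + |p|) ^ (-(1 + ε))) :
    ∃ (V : ℝ → E) (C' : ℝ),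
      LocallyIntegrable V ∧
      ContinuousOn V {0}ᶜ ∧
      (∀ r : ℝ, r ≠ 0 → ‖V r‖ ≤ C' * |r| ^ (ε - 1)) ∧
      (∀ ψ : SchwartzMap ℝ ℂ,
        ∫ p : ℝ, ((2 * π : ℝ)⁻¹ • ∫ r : ℝ, Complex.exp (Complex.I * p * r) * ψ r) • f p =
          ∫ r : ℝ, ψ r • V r) := by
  have hint : Integrable (deriv f) :=
    integrable_of_norm_le_one_add_abs_rpow hε0 (aestronglyMeasurable_deriv f volume) hder
  have hdecay := norm_le_abs_rpow_of_norm_le_one_add_abs_rpow hε0 hder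
  have hprim := intervalIntegral_deriv_eq_sub_of_lipschitzWith hlip hdiff
  exact ⟨inverseFourierOfDeriv (deriv f), C * (∫ u, oscillationKernel ε u) / (2 * π),
    locallyIntegrable_inverseFourierOfDeriv hε0 hε1 hint hdecay,
    continuousOn_inverseFourierOfDeriv hint,
    fun _ hr => norm_inverseFourierOfDeriv_le hε0 hε1 hdecay hr,
    fun ψ => (integral_smul_inverseFourierOfDeriv hε0 hε1 hprim hint hdecay htop hbot ψ).symm⟩

/-- the distributional inverse Fourier transform of `f` is represented by a
locally integrable function `V`, continuous off the origin, with `|V r| ≤ C' |r|^{ε-1}`. -/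
theorem stmt3 (f : ℝ → ℂ) (C ε : ℝ) (hε0 : 0 < ε) (hε1 : ε < 1)
    (hlip : ∃ L : NNReal, LipschitzWith L f)
    (hdiff : Differentiable ℝ f)
    (htop : Tendsto f atTop (𝓝 0)) (hbot : Tendsto f atBot (𝓝 0))
    (hder : ∀ p : ℝ, ‖deriv f p‖ ≤ C * (1 + |p|) ^ (-(1 + ε))) :
    ∃ (V : ℝ → ℂ) (C' : ℝ),
      LocallyIntegrable V ∧
      ContinuousOn V {0}ᶜ ∧
      (∀ r : ℝ, r ≠ 0 → ‖V r‖ ≤ C' * |r| ^ (ε - 1)) ∧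
      (∀ ψ : SchwartzMap ℝ ℂ,
        ∫ p : ℝ, f p * ((2 * π : ℝ)⁻¹ • ∫ r : ℝ, Complex.exp (Complex.I * p * r) * ψ r) =
          ∫ r : ℝ, V r * ψ r) := by
  obtain ⟨L, hL⟩ := hlip
  simpa only [smul_eq_mul, mul_comm] using
    stmt3_general hε0 hε1 hL (.of_forall hdiff) htop hbot (.of_forall hder)
end

section
/- Let K ≥ 1 and let f ∈ C^K(ℝ, ℂ) satisfy f(±∞) = 0 and |f^{(k)}(p)| ≤ C_k (1+|p|)^{-(k+ε)} for all 1 ≤ k ≤ K and some 0 < ε < 1. Then the inverse Fourier transform of f is represented by a function V which is of class C^{K-1} on ℝ \ {0} and satisfies |V^{(k-1)}(r)| ≤ C'_k |r|^{ε-k} for all r ≠ 0 and 1 ≤ k ≤ K. -/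
open Filter Real Topology MeasureTheory

/-!
Put `g ξ = f (-2πξ)`, so that the pairing of `f` with the inverse transform of `ψ` is `∫ 𝓕 ψ • g`.
The representing function is forced to be `V r = (2πi r)⁻¹ 𝓕 g' r`. Here `g'` is a symbol of
order `-(1 + ε)` with integral zero, hence `𝓕 g' r = ∫ (𝐞 (-x r) - 1) g' x dx`, and scaling
the integrable function `|x| ^ (-(1 + ε)) |𝐞 (-x) - 1|` gives `𝓕 g' r = O(|r| ^ ε)`.

Derivatives of `V` need no new estimate. Away from the origin,
`(r ^ a 𝓕 h)' = r ^ (a - 1) 𝓕 ((a - 1) h - x h')`, and `h ↦ (a - 1) h - x h'` preserves both the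
symbol order, at the price of one derivative, and the vanishing of the integral.

For the representation, `∫ 𝓕 ψ • g` is integrated by parts against the antiderivative of `𝓕 ψ`
that vanishes at `0`; this antiderivative is an integral operator whose kernel is
`O(|r| ^ (δ - 1) |ξ| ^ δ)` for `0 ≤ δ ≤ 1`, and any `0 < δ < ε` makes Fubini's theorem applicable.
-/

open scoped FourierTransform SchwartzMap
open Asymptotics

section Integrability

variable {X F : Type*} [NormedAddCommGroup X] [NormedSpace ℝ X] [FiniteDimensional ℝ X]
  [MeasurableSpace X] [BorelSpace X] {μ : Measure X} [μ.IsAddHaarMeasure] [NormedAddCommGroup F]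

theorem integrable_of_isBigO_norm_rpow (hX : 1 ≤ Module.finrank ℝ X) {f : X → F} {a b : ℝ}
    (hf : AEStronglyMeasurable f μ) (ha : -Module.finrank ℝ X < a) (hb : b < -Module.finrank ℝ X)
    (hfa : f =O[ae μ] fun x => ‖x‖ ^ a) (hfb : f =O[ae μ] fun x => ‖x‖ ^ b) :
    Integrable f μ := by
  obtain ⟨A, hA⟩ := hfa.bound
  obtain ⟨B, hB⟩ := hfb.bound
  have hball : IntegrableOn f (Metric.ball 0 1) μ := by
    refine integrableOn_ball_of_norm_le_rpow hX (α := -a) (by linarith) (C := A) ?_ hf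
    filter_upwards [ae_restrict_of_ae hA] with x hx
    rwa [Real.norm_of_nonneg (by positivity), ← neg_neg a] at hx
  have hcompl : IntegrableOn f (Metric.ball 0 1)ᶜ μ := by
    have hint := integrable_one_add_norm (E := X) (μ := μ) (r := -b) (by linarith)
    simp only [neg_neg] at hint
    refine (hint.const_mul (|B| * 2 ^ (-b))).integrableOn.mono' hf.restrict ?_
    filter_upwards [ae_restrict_of_ae hB, ae_restrict_mem Metric.isOpen_ball.measurableSet.compl]
      with x hx hx1
    have hx1 : 1 ≤ ‖x‖ := by simpa using hx1
    have hcomp : ‖x‖ ^ b ≤ 2 ^ (-b) * (1 + ‖x‖) ^ b := by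
      rw [Real.rpow_neg zero_le_two, ← div_eq_inv_mul,
        le_div_iff₀ (by positivity), ← Real.mul_rpow (norm_nonneg x) zero_le_two]
      exact Real.rpow_le_rpow_of_nonpos (by positivity) (by linarith)
        (by have := Nat.cast_nonneg (α := ℝ) (Module.finrank ℝ X); linarith)
    calc ‖f x‖ ≤ B * ‖x‖ ^ b := by rwa [Real.norm_of_nonneg (by positivity)] at hx
      _ ≤ |B| * (2 ^ (-b) * (1 + ‖x‖) ^ b) := by gcongr; exact le_abs_self B
      _ = _ := (mul_assoc _ _ _).symm
  rw [← integrableOn_univ, ← Set.union_compl_self (Metric.ball (0 : X) 1)]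
  exact hball.union hcompl

theorem integrable_norm_rpow_smul_schwartzMap [NormedSpace ℝ F] (hX : 1 ≤ Module.finrank ℝ X)
    {s : ℝ} (hs : -Module.finrank ℝ X < s) (ψ : 𝓢(X, F)) :
    Integrable (fun x => ‖x‖ ^ s • ψ x) μ := by
  have : Nontrivial X := Module.nontrivial_of_finrank_pos (R := ℝ) hX
  obtain ⟨k, hk⟩ := exists_nat_gt (s + Module.finrank ℝ X)
  have hO (j : ℕ) : (fun x => ‖x‖ ^ s • ψ x) =O[ae μ] fun x => ‖x‖ ^ (s - j) := by
    obtain ⟨C, -, hC⟩ := ψ.decay j 0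
    refine IsBigO.of_bound C ?_
    filter_upwards [Measure.ae_ne μ 0] with x hx
    have hx0 : 0 < ‖x‖ := norm_pos_iff.2 hx
    calc ‖‖x‖ ^ s • ψ x‖ = ‖x‖ ^ (s - j) * (‖x‖ ^ j * ‖ψ x‖) := by
          rw [norm_smul, Real.norm_of_nonneg (by positivity), ← mul_assoc, ← Real.rpow_natCast,
            ← Real.rpow_add hx0, sub_add_cancel]
      _ ≤ ‖x‖ ^ (s - j) * C := by
          gcongr
          simpa only [norm_iteratedFDeriv_zero] using hC x
      _ = C * ‖‖x‖ ^ (s - j)‖ := by rw [Real.norm_of_nonneg (by positivity), mul_comm]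
  refine integrable_of_isBigO_norm_rpow hX (Measurable.aestronglyMeasurable (by fun_prop) |>.smul
    ψ.continuous.aestronglyMeasurable) hs (b := s - k) (by linarith) (by simpa using hO 0) (hO k)

end Integrability

theorem norm_fourierChar_sub_one_le {δ : ℝ} (hδ0 : 0 ≤ δ) (hδ1 : δ ≤ 1) (x : ℝ) :
    ‖(𝐞 x : ℂ) - 1‖ ≤ 2 * π * |x| ^ δ := by
  rcases le_total |x| 1 with hx | hx
  · calc ‖(𝐞 x : ℂ) - 1‖ ≤ ‖2 * π * x‖ := by
          rw [Real.fourierChar_apply, mul_comm]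
          exact Real.norm_exp_I_mul_ofReal_sub_one_le
      _ = 2 * π * |x| := by rw [norm_mul, Real.norm_of_nonneg two_pi_pos.le, Real.norm_eq_abs]
      _ ≤ 2 * π * |x| ^ δ := by
          gcongr
          exact Real.self_le_rpow_of_le_one (abs_nonneg x) hx hδ1
  · calc ‖(𝐞 x : ℂ) - 1‖ ≤ ‖(𝐞 x : ℂ)‖ + ‖(1 : ℂ)‖ := norm_sub_le _ _
      _ ≤ 2 * π * 1 := by rw [Circle.norm_coe, norm_one]; linarith [Real.pi_gt_three]
      _ ≤ 2 * π * |x| ^ δ := by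
          gcongr
          exact Real.one_le_rpow hx hδ0

theorem integrable_rpow_mul_norm_fourierChar_sub_one {ε : ℝ} (hε0 : 0 < ε) (hε1 : ε < 1) :
    Integrable fun x : ℝ => |x| ^ (-(1 + ε)) * ‖(𝐞 (-x) : ℂ) - 1‖ := by
  have hO {δ : ℝ} (hδ0 : 0 ≤ δ) (hδ1 : δ ≤ 1) :
      (fun x : ℝ => |x| ^ (-(1 + ε)) * ‖(𝐞 (-x) : ℂ) - 1‖)
        =O[ae volume] fun x => ‖x‖ ^ (-(1 + ε) + δ) := by
    refine IsBigO.of_bound (2 * π) ?_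
    filter_upwards [Measure.ae_ne volume 0] with x hx
    have := norm_fourierChar_sub_one_le hδ0 hδ1 (-x)
    rw [abs_neg] at this
    rw [Real.norm_of_nonneg (by positivity), Real.norm_of_nonneg (by positivity),
      Real.norm_eq_abs, Real.rpow_add (abs_pos.2 hx), mul_left_comm]
    gcongr
  refine integrable_of_isBigO_norm_rpow (by simp) (Measurable.aestronglyMeasurable ?_)
    (a := -(1 + ε) + 1) (b := -(1 + ε) + 0) (by simpa using hε1) (by simpa using hε0)
    (hO zero_le_one le_rfl) (hO le_rfl zero_le_one)
  fun_prop

section FourierIntegral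

variable {E : Type*} [NormedAddCommGroup E] [NormedSpace ℂ E]

theorem integrable_fourierChar_smul {h : ℝ → E} (hh : Integrable h) (r : ℝ) :
    Integrable fun x => 𝐞 (-(x * r)) • h x := by
  simpa [mul_comm] using (Real.fourierIntegral_convergent_iff r).2 hh

theorem isBigO_fourier_sub_integral {ε : ℝ} (hε0 : 0 < ε) (hε1 : ε < 1) {h : ℝ → E}
    (hint : Integrable h) (hO : h =O[ae volume] fun x => |x| ^ (-(1 + ε))) :
    (fun r => 𝓕 h r - ∫ x, h x) =O[⊤] fun r => |r| ^ ε := by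
  obtain ⟨C, hC⟩ := hO.bound
  let k : ℝ → ℝ := fun x => |x| ^ (-(1 + ε)) * ‖(𝐞 (-x) : ℂ) - 1‖
  refine isBigO_top.2 ⟨C * ∫ x, k x, fun r => ?_⟩
  rcases eq_or_ne r 0 with rfl | hr
  · simp [Real.fourier_real_eq, hε0.ne']
  have hkr : ∀ x, |x| ^ (-(1 + ε)) * ‖(𝐞 (-(x * r)) : ℂ) - 1‖ = |r| ^ (1 + ε) * k (x * r) := by
    intro x
    simp only [k, abs_mul, Real.mul_rpow (abs_nonneg x) (abs_nonneg r)]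
    rw [Real.rpow_neg (abs_nonneg r)]
    have : |r| ^ (1 + ε) ≠ 0 := (Real.rpow_pos_of_pos (abs_pos.2 hr) _).ne'
    field_simp
  have hkint : Integrable fun x => k (x * r) :=
    (integrable_rpow_mul_norm_fourierChar_sub_one hε0 hε1).comp_mul_right' hr
  calc ‖𝓕 h r - ∫ x, h x‖ = ‖∫ x, ((𝐞 (-(x * r)) : ℂ) - 1) • h x‖ := by
        rw [Real.fourier_real_eq, ← integral_sub (integrable_fourierChar_smul hint r) hint]
        simp only [sub_smul, one_smul, Circle.smul_def]
    _ ≤ ∫ x, C * |r| ^ (1 + ε) * k (x * r) := by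
        refine norm_integral_le_of_norm_le (hkint.const_mul _) ?_
        filter_upwards [hC] with x hx
        rw [mul_assoc, ← hkr, norm_smul, mul_comm, ← mul_assoc]
        gcongr
        rwa [Real.norm_of_nonneg (by positivity)] at hx
    _ = C * (∫ x, k x) * |r| ^ ε := by
        rw [integral_const_mul, Measure.integral_comp_mul_right, smul_eq_mul, abs_inv,
          Real.rpow_add (abs_pos.2 hr), Real.rpow_one]
        field_simp
    _ = C * (∫ x, k x) * ‖|r| ^ ε‖ := by rw [Real.norm_of_nonneg (by positivity)]

theorem hasDerivAt_fourier_of_ne_zero {h : ℝ → E} (hdiff : Differentiable ℝ h)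
    (hint : Integrable h) (hint' : Integrable (deriv h))
    (hmul : Integrable fun x => x • deriv h x) {r : ℝ} (hr : r ≠ 0) :
    HasDerivAt (𝓕 h) (-(r⁻¹ • (𝓕 h r + 𝓕 (fun x => x • deriv h x) r))) r := by
  have hdivide {s : ℝ} (hs : s ≠ 0) :
      𝓕 h s = (2 * π * Complex.I)⁻¹ • s⁻¹ • 𝓕 (deriv h) s := by
    have hsC : (s : ℂ) ≠ 0 := by exact_mod_cast hs
    rw [Real.fourier_deriv hint hdiff hint', ← Complex.coe_smul, smul_smul, smul_smul,
      Complex.ofReal_inv]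
    field_simp
    simp
  have hconst : 𝓕 (fun x : ℝ => (-2 * π * Complex.I * x) • deriv h x) r =
      -(2 * π * Complex.I : ℂ) • 𝓕 (fun x => x • deriv h x) r := by
    simp only [Real.fourier_real_eq, ← integral_smul, Circle.smul_def, ← Complex.coe_smul,
      smul_smul]
    congr 1 with x
    ring_nf
  have hder := (((hasDerivAt_inv hr).smul (Real.hasDerivAt_fourier hint' hmul r)).const_smul
    (2 * π * Complex.I : ℂ)⁻¹).congr_of_eventuallyEq
    ((eventually_ne_nhds hr).mono fun s hs => hdivide hs)
  convert hder using 1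
  rw [hconst, hdivide hr]
  have hrC : (r : ℂ) ≠ 0 := by exact_mod_cast hr
  simp only [← Complex.coe_smul]
  push_cast
  match_scalars <;> field_simp

end FourierIntegral

/-- The symbol class `S^m(ℝ; E)` up to derivatives of order `n`: functions of class `C^n` whose
`j`-th derivative is `O((1 + |x|)^(m - j))` on the whole line for `j ≤ n`. -/
structure IsSymbol {E : Type*} [NormedAddCommGroup E] [NormedSpace ℝ E]
    (n : ℕ) (m : ℝ) (h : ℝ → E) : Prop where
  contDiff : ContDiff ℝ n h
  isBigO : ∀ j ≤ n, iteratedDeriv j h =O[⊤] fun x => (1 + |x|) ^ (m - j)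

theorem isTheta_one_add_abs_mul {c : ℝ} (hc : c ≠ 0) :
    (fun x => 1 + |c * x|) =Θ[⊤] fun x => 1 + |x| := by
  have hO (c : ℝ) : (fun x => 1 + |c * x|) =O[⊤] fun x => 1 + |x| := by
    refine isBigO_top.2 ⟨1 + |c|, fun x => ?_⟩
    rw [Real.norm_of_nonneg (by positivity), Real.norm_of_nonneg (by positivity), abs_mul]
    linarith [abs_nonneg c, abs_nonneg x]
  refine ⟨hO c, ?_⟩
  exact ((hO c⁻¹).comp_tendsto (tendsto_top (f := fun x => c * x))).congr_left fun x => by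
    rw [Function.comp_apply, inv_mul_cancel_left₀ hc]

namespace IsSymbol

variable {E : Type*} [NormedAddCommGroup E] [NormedSpace ℝ E] {n : ℕ} {l m c : ℝ}
  {g h : ℝ → E}

theorem of_le {k : ℕ} (hh : IsSymbol n m h) (hk : k ≤ n) : IsSymbol k m h :=
  ⟨hh.contDiff.of_le (by exact_mod_cast hk), fun j hj => hh.isBigO j (hj.trans hk)⟩

theorem isBigO_self (hh : IsSymbol n m h) : h =O[⊤] fun x => (1 + |x|) ^ m := by
  simpa using hh.isBigO 0 n.zero_le

protected theorem differentiable (hh : IsSymbol (n + 1) m h) : Differentiable ℝ h :=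
  hh.contDiff.differentiable (by simp)

protected theorem deriv (hh : IsSymbol (n + 1) m h) : IsSymbol n (m - 1) (deriv h) where
  contDiff := (contDiff_succ_iff_deriv.1 (by exact_mod_cast hh.contDiff)).2.2
  isBigO j hj := by
    rw [← iteratedDeriv_succ']
    convert hh.isBigO (j + 1) (by omega) using 3
    push_cast
    ring

theorem deriv_of_norm_iteratedDeriv_le {C : ℕ → ℝ} (hh : ContDiff ℝ (n + 1) h)
    (hle : ∀ j ≤ n, ∀ x, ‖iteratedDeriv (j + 1) h x‖ ≤ C j * (1 + |x|) ^ (m - j)) :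
    IsSymbol n m (deriv h) where
  contDiff := (contDiff_succ_iff_deriv.1 hh).2.2
  isBigO j hj := isBigO_top.2 ⟨C j, fun x => by
    rw [← iteratedDeriv_succ', Real.norm_of_nonneg (by positivity)]
    exact hle j hj x⟩

protected theorem sub (hg : IsSymbol n m g) (hh : IsSymbol n m h) :
    IsSymbol n m (fun x => g x - h x) where
  contDiff := hg.contDiff.sub hh.contDiff
  isBigO j hj := by
    have hj' : (j : WithTop ℕ∞) ≤ n := by exact_mod_cast hj
    exact ((hg.isBigO j hj).sub (hh.isBigO j hj)).congr_left fun x => (iteratedDeriv_fun_sub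
      (hg.contDiff.of_le hj').contDiffAt (hh.contDiff.of_le hj').contDiffAt).symm

protected theorem const_smul (a : ℝ) (hh : IsSymbol n m h) : IsSymbol n m (fun x => a • h x) where
  contDiff := contDiff_const.smul hh.contDiff
  isBigO j hj := ((hh.isBigO j hj).const_smul_left a).congr_left fun _ =>
    (iteratedDeriv_fun_const_smul_field a h).symm

protected theorem smul {a : ℝ → ℝ} (ha : IsSymbol n l a) (hh : IsSymbol n m h) :
    IsSymbol n (l + m) (fun x => a x • h x) where
  contDiff := ha.contDiff.smul hh.contDiff
  isBigO j hj := by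
    have hterm (i : ℕ) (hi : i ∈ Finset.range (j + 1)) :
        (fun x => (j.choose i : ℝ) * ‖iteratedFDeriv ℝ i a x‖ * ‖iteratedFDeriv ℝ (j - i) h x‖)
          =O[⊤] fun x => (1 + |x|) ^ (l + m - j) := by
      have hij : i ≤ j := Finset.mem_range_succ_iff.1 hi
      simp only [norm_iteratedFDeriv_eq_norm_iteratedDeriv]
      refine (((ha.isBigO i (by omega)).norm_left.const_mul_left _).mul
        (hh.isBigO (j - i) (by omega)).norm_left).congr_right fun x => ?_
      rw [← Real.rpow_add (by positivity), Nat.cast_sub hij]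
      ring_nf
    refine (IsBigO.of_norm_le fun x => ?_).trans (IsBigO.fun_sum hterm)
    rw [← norm_iteratedFDeriv_eq_norm_iteratedDeriv]
    exact norm_iteratedFDeriv_smul_le ha.contDiff hh.contDiff x (by exact_mod_cast hj)

protected theorem id : IsSymbol n 1 (fun x : ℝ => x) where
  contDiff := contDiff_id
  isBigO j _ := by
    refine isBigO_top.2 ⟨1, fun x => ?_⟩
    rw [iteratedDeriv_fun_id, one_mul]
    rcases j with _ | _ | j
    · simpa using (le_add_of_nonneg_left zero_le_one).trans (le_abs_self (1 + |x|))
    · simp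
    · simp

theorem id_smul (hh : IsSymbol n m h) : IsSymbol n (m + 1) (fun x => x • h x) :=
  add_comm m 1 ▸ IsSymbol.id.smul hh

theorem comp_mul_left (hc : c ≠ 0) (hh : IsSymbol n m h) : IsSymbol n m (fun x => h (c * x)) where
  contDiff := hh.contDiff.comp (contDiff_const.mul contDiff_id)
  isBigO j hj := by
    rw [iteratedDeriv_comp_const_smul (hh.contDiff.of_le (by exact_mod_cast hj))]
    have hcj : (fun x => iteratedDeriv j h (c * x)) =O[⊤] fun x => (1 + |c * x|) ^ (m - j) :=
      (hh.isBigO j hj).comp_tendsto tendsto_top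
    exact (hcj.const_smul_left (c ^ j)).trans ((isTheta_one_add_abs_mul hc).rpow
      (.of_forall fun x => by positivity) (.of_forall fun x => by positivity)).isBigO

protected theorem deriv_comp_mul_left (hc : c ≠ 0) (hh : IsSymbol n m (deriv h)) :
    IsSymbol n m (deriv fun x => h (c * x)) := by
  rw [funext (_root_.deriv_comp_mul_left c h)]
  exact (hh.comp_mul_left hc).const_smul c

theorem integrable_abs_rpow_smul {s : ℝ} (hh : IsSymbol n m h) (hs : 0 ≤ s) (hm : m + s < -1) :
    Integrable fun x => |x| ^ s • h x := by
  have hint := integrable_one_add_norm (E := ℝ) (μ := volume) (r := -(s + m)) (by simp; linarith)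
  rw [neg_neg] at hint
  have hO : (fun x : ℝ => |x| ^ s) =O[⊤] fun x => (1 + |x|) ^ s := IsBigO.of_norm_le fun x => by
    rw [Real.norm_of_nonneg (by positivity)]
    gcongr
    linarith
  refine ((hO.smul hh.isBigO_self).congr_right fun x => ?_).integrable
    ((by fun_prop : Measurable _).aestronglyMeasurable.smul
      hh.contDiff.continuous.aestronglyMeasurable) hint
  rw [smul_eq_mul, ← Real.rpow_add (by positivity), Real.norm_eq_abs]

protected theorem integrable (hh : IsSymbol n m h) (hm : m < -1) : Integrable h := by
  simpa using hh.integrable_abs_rpow_smul le_rfl (by simpa using hm)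

theorem tendsto_zero {u : Filter ℝ} (hh : IsSymbol n m h) (hm : m < 0)
    (hu : Tendsto abs u atTop) : Tendsto h u (𝓝 0) := by
  refine (hh.isBigO_self.mono le_top).trans_tendsto ?_
  rw [← neg_neg m]
  exact (tendsto_rpow_neg_atTop (neg_pos.2 hm)).comp (tendsto_atTop_add_const_left _ 1 hu)

end IsSymbol

/-- The Euler operator `h ↦ (a - 1) h - x h'`. Under the Fourier transform, it carries the weight
`r ^ a` to the derivative: `(r ^ a 𝓕 h)' = r ^ (a - 1) 𝓕 (eulerOp a h)` away from the origin. -/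
noncomputable def eulerOp {E : Type*} [NormedAddCommGroup E] [NormedSpace ℝ E] (a : ℝ)
    (h : ℝ → E) (x : ℝ) : E :=
  (a - 1) • h x - x • deriv h x

namespace IsSymbol

section EulerOp

variable {E : Type*} [NormedAddCommGroup E] [NormedSpace ℝ E] {n : ℕ} {m : ℝ} {h : ℝ → E}

theorem id_smul_deriv (hh : IsSymbol (n + 1) m h) : IsSymbol n m (fun x => x • deriv h x) := by
  simpa using hh.deriv.id_smul

protected theorem eulerOp (a : ℝ) (hh : IsSymbol (n + 1) m h) : IsSymbol n m (eulerOp a h) :=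
  ((hh.of_le n.le_succ).const_smul (a - 1)).sub hh.id_smul_deriv

theorem integral_id_smul_deriv [CompleteSpace E] (hh : IsSymbol (n + 1) m h) (hm : m < -1) :
    ∫ x, x • deriv h x = -∫ x, h x := by
  have hint := hh.integrable hm
  have hint' := hh.id_smul_deriv.integrable hm
  have hzero {u : Filter ℝ} (hu : Tendsto abs u atTop) : Tendsto (fun x => x • h x) u (𝓝 0) :=
    hh.id_smul.tendsto_zero (by linarith) hu
  have hder (x : ℝ) : HasDerivAt (fun x => x • h x) (x • deriv h x + h x) x := by
    simpa using (hasDerivAt_id' x).fun_smul (hh.differentiable x).hasDerivAt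
  have htotal := integral_of_hasDerivAt_of_tendsto hder (hint'.add hint)
    (hzero tendsto_abs_atBot_atTop) (hzero tendsto_abs_atTop_atTop)
  rw [integral_add hint' hint, sub_zero] at htotal
  exact eq_neg_of_add_eq_zero_left htotal

theorem integral_eulerOp [CompleteSpace E] (a : ℝ) (hh : IsSymbol (n + 1) m h) (hm : m < -1) :
    ∫ x, eulerOp a h x = a • ∫ x, h x := by
  simp only [eulerOp]
  rw [integral_sub ((hh.integrable hm).fun_smul _) (hh.id_smul_deriv.integrable hm), integral_smul,
    hh.integral_id_smul_deriv hm]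
  module

end EulerOp

section Fourier

variable {E : Type*} [NormedAddCommGroup E] [NormedSpace ℂ E] {n : ℕ} {m ε : ℝ} {h : ℝ → E}

theorem hasDerivAt_zpow_smul_fourier (hh : IsSymbol (n + 1) m h) (hm : m < -1) (a : ℤ) {r : ℝ}
    (hr : r ≠ 0) :
    HasDerivAt (fun r => r ^ a • 𝓕 h r) (r ^ (a - 1) • 𝓕 (eulerOp a h) r) r := by
  have hint := hh.integrable hm
  have hmul := hh.id_smul_deriv.integrable hm
  have heuler : 𝓕 (eulerOp a h) r =
      ((a : ℝ) - 1) • 𝓕 h r - 𝓕 (fun x => x • deriv h x) r := by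
    simp only [Real.fourier_real_eq]
    rw [← integral_smul, ← integral_sub ((integrable_fourierChar_smul hint r).fun_smul _)
      (integrable_fourierChar_smul hmul r)]
    congr 1 with x
    rw [eulerOp, smul_sub, smul_comm]
  have hder := (hasDerivAt_zpow a r (.inl hr)).fun_smul (hasDerivAt_fourier_of_ne_zero
    hh.differentiable hint (hh.deriv.integrable (by linarith)) hmul hr)
  convert hder using 1
  rw [heuler, zpow_sub_one₀ hr]
  module

theorem eqOn_derivWithin_zpow_smul_fourier (hh : IsSymbol (n + 1) m h) (hm : m < -1) (a : ℤ) :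
    Set.EqOn (derivWithin (fun r => r ^ a • 𝓕 h r) {0}ᶜ)
      (fun r => r ^ (a - 1) • 𝓕 (eulerOp a h) r) {0}ᶜ := fun _ hr =>
  (hh.hasDerivAt_zpow_smul_fourier hm a hr).hasDerivWithinAt.derivWithin
    (isOpen_compl_singleton.uniqueDiffWithinAt hr)

theorem contDiffOn_zpow_smul_fourier (hh : IsSymbol n m h) (hm : m < -1) (a : ℤ) :
    ContDiffOn ℝ n (fun r => r ^ a • 𝓕 h r) {0}ᶜ := by
  induction n generalizing h a with
  | zero =>
    have hcont : Continuous (𝓕 h) := VectorFourier.fourierIntegral_continuous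
      Real.continuous_fourierChar continuous_inner (hh.integrable hm)
    exact contDiffOn_zero.2 ((continuousOn_zpow₀ a).smul hcont.continuousOn)
  | succ n ih =>
    push_cast
    rw [contDiffOn_succ_iff_derivWithin isOpen_compl_singleton.uniqueDiffOn]
    exact ⟨fun _ hr => (hh.hasDerivAt_zpow_smul_fourier hm a hr).differentiableAt
      |>.differentiableWithinAt, by simp,
      (ih (hh.eulerOp a) (a - 1)).congr (hh.eqOn_derivWithin_zpow_smul_fourier hm a)⟩

theorem isBigO_iteratedDerivWithin_zpow_smul_fourier [CompleteSpace E] (hε0 : 0 < ε) (hε1 : ε < 1)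
    (hh : IsSymbol n (-(1 + ε)) h) (hmean : ∫ x, h x = 0) (a : ℤ) :
    iteratedDerivWithin n (fun r => r ^ a • 𝓕 h r) {0}ᶜ
      =O[𝓟 {0}ᶜ] fun r => |r| ^ (ε + a - n) := by
  have hm : -(1 + ε) < -1 := by linarith
  induction n generalizing h a with
  | zero =>
    have hdecay : h =O[ae volume] fun x => |x| ^ (-(1 + ε)) := by
      refine (hh.isBigO_self.mono le_top).trans (IsBigO.of_bound 1 ?_)
      filter_upwards [Measure.ae_ne volume 0] with x hx
      rw [one_mul, Real.norm_of_nonneg (by positivity), Real.norm_of_nonneg (by positivity)]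
      exact Real.rpow_le_rpow_of_nonpos (abs_pos.2 hx) (by linarith) (by linarith)
    have hfourier := isBigO_fourier_sub_integral hε0 hε1 (hh.integrable hm) hdecay
    simp only [hmean, sub_zero] at hfourier
    have hzpow : (fun r : ℝ => r ^ a) =O[𝓟 {0}ᶜ] fun r => |r| ^ a :=
      IsBigO.of_norm_le fun r => by simp
    rw [iteratedDerivWithin_zero]
    refine (hzpow.smul (hfourier.mono le_top)).trans_eventuallyEq
      (eventually_principal.2 fun r hr => ?_)
    simp only [Nat.cast_zero, sub_zero, smul_eq_mul]
    rw [Real.rpow_add (abs_pos.2 hr), Real.rpow_intCast, mul_comm]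
  | succ n ih =>
    have hmean' : ∫ x, eulerOp a h x = 0 := by rw [hh.integral_eulerOp a hm, hmean, smul_zero]
    refine ((ih (hh.eulerOp a) hmean' (a - 1)).congr'
      (eventually_principal.2 fun r hr => ?_) (.of_eq ?_))
    · rw [iteratedDerivWithin_succ']
      exact (iteratedDerivWithin_congr (hh.eqOn_derivWithin_zpow_smul_fourier hm a) hr).symm
    · ext r
      congr 1
      push_cast
      ring

end Fourier

end IsSymbol

section RegularFourier

variable {E : Type*} [NormedAddCommGroup E] [NormedSpace ℂ E] {n : ℕ} {m ε : ℝ} {g : ℝ → E}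

/-- The function that represents, away from the origin, the Fourier transform of a slowly decaying
function `g` as a tempered distribution: `𝓕 g' = 2πi r 𝓕 g` is solved for `𝓕 g`. Its value at the
origin is `0` by the convention `0⁻¹ = 0`. -/
noncomputable def regularFourier (g : ℝ → E) (r : ℝ) : E :=
  (2 * π * Complex.I : ℂ)⁻¹ • r⁻¹ • 𝓕 (deriv g) r

theorem regularFourier_eq_const_smul_zpow_smul (g : ℝ → E) : regularFourier g =
    (2 * π * Complex.I : ℂ)⁻¹ • fun r => r ^ (-1 : ℤ) • 𝓕 (deriv g) r := by
  ext r
  rw [regularFourier, Pi.smul_apply, zpow_neg_one]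

theorem IsSymbol.contDiffOn_regularFourier (hg : IsSymbol n m (deriv g)) (hm : m < -1) :
    ContDiffOn ℝ n (regularFourier g) {0}ᶜ := by
  rw [regularFourier_eq_const_smul_zpow_smul]
  exact contDiffOn_const.smul (hg.contDiffOn_zpow_smul_fourier hm (-1))

theorem IsSymbol.isBigO_iteratedDerivWithin_regularFourier [CompleteSpace E] (hε0 : 0 < ε)
    (hε1 : ε < 1) (hg : IsSymbol n (-(1 + ε)) (deriv g)) (hmean : ∫ ξ, deriv g ξ = 0) :
    iteratedDerivWithin n (regularFourier g) {0}ᶜ =O[𝓟 {0}ᶜ] fun r => |r| ^ (ε - 1 - n) := by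
  have hO := (hg.isBigO_iteratedDerivWithin_zpow_smul_fourier hε0 hε1 hmean (-1)).const_smul_left
    (2 * π * Complex.I : ℂ)⁻¹
  rw [regularFourier_eq_const_smul_zpow_smul]
  refine (hO.congr_left fun r => ?_).congr_right fun r => by push_cast; ring_nf
  rw [iteratedDerivWithin_const_smul_field]
  rfl

theorem IsSymbol.exists_norm_iteratedDerivWithin_regularFourier_le [CompleteSpace E] (hε0 : 0 < ε)
    (hε1 : ε < 1) (hg : IsSymbol n (-(1 + ε)) (deriv g)) (hmean : ∫ ξ, deriv g ξ = 0) :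
    ∃ C : ℕ → ℝ, ∀ j ≤ n, ∀ r ≠ 0,
      ‖iteratedDerivWithin j (regularFourier g) {0}ᶜ r‖ ≤ C j * |r| ^ (ε - 1 - j) := by
  have hbound (j : ℕ) (hj : j ≤ n) : ∃ C, ∀ r ≠ 0,
      ‖iteratedDerivWithin j (regularFourier g) {0}ᶜ r‖ ≤ C * |r| ^ (ε - 1 - j) := by
    obtain ⟨C, hC⟩ := isBigO_principal.1
      ((hg.of_le hj).isBigO_iteratedDerivWithin_regularFourier hε0 hε1 hmean)
    refine ⟨C, fun r hr => (hC r hr).trans_eq ?_⟩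
    rw [Real.norm_of_nonneg (by positivity)]
  choose! C hC using hbound
  exact ⟨C, hC⟩

theorem IsSymbol.locallyIntegrable_regularFourier [CompleteSpace E] (hε0 : 0 < ε) (hε1 : ε < 1)
    (hg : IsSymbol n (-(1 + ε)) (deriv g)) (hmean : ∫ ξ, deriv g ξ = 0) :
    LocallyIntegrable (regularFourier g) := by
  have hcont := (hg.contDiffOn_regularFourier (by linarith)).continuousOn
  obtain ⟨C, hC⟩ := hg.exists_norm_iteratedDerivWithin_regularFourier_le hε0 hε1 hmean
  refine locallyIntegrable_of_norm_le_rpow (by simp) (α := 1 - ε) (C := C 0) (by simpa using hε0)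
    ?_ ?_
  · filter_upwards [Measure.ae_ne volume 0] with r hr
    simpa using hC 0 n.zero_le r hr
  · rw [← Measure.restrict_eq_self_of_ae_mem (Measure.ae_ne volume (0 : ℝ))]
    exact hcont.aestronglyMeasurable isOpen_compl_singleton.measurableSet

end RegularFourier

theorem isBigO_one_of_hasDerivAt_of_integrable {E : Type*} [NormedAddCommGroup E] [NormedSpace ℝ E]
    [CompleteSpace E] {f f' : ℝ → E} (hderiv : ∀ x, HasDerivAt f (f' x) x)
    (hint : Integrable f') : f =O[⊤] fun _ => (1 : ℝ) := by
  refine isBigO_top.2 ⟨‖f 0‖ + ∫ x, ‖f' x‖, fun x => ?_⟩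
  have hftc : ∫ t in 0..x, f' t = f x - f 0 :=
    intervalIntegral.integral_eq_sub_of_hasDerivAt (fun t _ => hderiv t) hint.intervalIntegrable
  have hle : ‖∫ t in 0..x, f' t‖ ≤ ∫ t, ‖f' t‖ :=
    intervalIntegral.norm_integral_le_integral_norm_uIoc.trans
      (setIntegral_le_integral hint.norm (.of_forall fun t => norm_nonneg _))
  rw [norm_one, mul_one, ← add_sub_cancel (f 0) (f x), ← hftc]
  exact (norm_add_le _ _).trans (by gcongr)

theorem integral_deriv_eq_zero_of_tendsto {E : Type*} [NormedAddCommGroup E] [NormedSpace ℝ E]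
    [CompleteSpace E] {f : ℝ → E} (hdiff : Differentiable ℝ f) (hint : Integrable (deriv f))
    (htop : Tendsto f atTop (𝓝 0)) (hbot : Tendsto f atBot (𝓝 0)) : ∫ x, deriv f x = 0 := by
  simpa using integral_of_hasDerivAt_of_tendsto (fun x => (hdiff x).hasDerivAt) hint hbot htop

section Duality

variable {E : Type*} [NormedAddCommGroup E] [NormedSpace ℂ E] {δ : ℝ}

/-- The kernel `(𝐞 (-r ξ) - 1) / r`: up to the factor `-2πi`, the antiderivative in `ξ` of the
Fourier kernel, normalized to vanish at `ξ = 0` and hence less singular in `r` than `1 / r`. -/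
noncomputable def primitiveKernel (r ξ : ℝ) : ℂ :=
  r⁻¹ • ((𝐞 (-(r * ξ)) : ℂ) - 1)

/-- The antiderivative of `-2πi 𝓕 ψ` that vanishes at the origin, as an integral operator; it
moves the factor `1 / r` of `regularFourier` onto the test function. -/
noncomputable def fourierPrimitive (ψ : ℝ → E) (ξ : ℝ) : E :=
  ∫ r, primitiveKernel r ξ • ψ r

theorem measurable_primitiveKernel : Measurable (Function.uncurry primitiveKernel) := by
  unfold primitiveKernel Function.uncurry
  fun_prop

theorem norm_primitiveKernel_le (hδ0 : 0 ≤ δ) (hδ1 : δ ≤ 1) (r ξ : ℝ) :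
    ‖primitiveKernel r ξ‖ ≤ 2 * π * |r| ^ (δ - 1) * |ξ| ^ δ := by
  rcases eq_or_ne r 0 with rfl | hr
  · simp only [primitiveKernel, inv_zero, zero_smul, norm_zero]
    positivity
  calc ‖primitiveKernel r ξ‖ = |r|⁻¹ * ‖(𝐞 (-(r * ξ)) : ℂ) - 1‖ := by
        rw [primitiveKernel, norm_smul, Real.norm_eq_abs, abs_inv]
    _ ≤ |r|⁻¹ * (2 * π * |-(r * ξ)| ^ δ) := by
        gcongr
        exact norm_fourierChar_sub_one_le hδ0 hδ1 _
    _ = 2 * π * |r| ^ (δ - 1) * |ξ| ^ δ := by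
        rw [abs_neg, abs_mul, Real.mul_rpow (abs_nonneg r) (abs_nonneg ξ),
          Real.rpow_sub_one (abs_pos.2 hr).ne']
        ring

theorem hasDerivAt_primitiveKernel {r : ℝ} (hr : r ≠ 0) (ξ : ℝ) :
    HasDerivAt (primitiveKernel r) (-(2 * π * Complex.I) * 𝐞 (-(r * ξ))) ξ := by
  have hder := (((Real.hasDerivAt_fourierChar (-(r * ξ))).scomp ξ
    ((hasDerivAt_id' ξ).const_mul r).fun_neg).sub_const 1).fun_const_smul r⁻¹
  refine hder.congr_deriv ?_
  have hrC : (r : ℂ) ≠ 0 := by exact_mod_cast hr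
  simp only [Complex.real_smul]
  push_cast
  field_simp

theorem aestronglyMeasurable_primitiveKernel_smul {ψ : ℝ → E}
    (hψ : AEStronglyMeasurable ψ) (ξ : ℝ) :
    AEStronglyMeasurable fun r => primitiveKernel r ξ • ψ r :=
  (measurable_primitiveKernel.comp
    (measurable_id.prodMk measurable_const)).aestronglyMeasurable.smul hψ

theorem hasDerivAt_fourierPrimitive {ψ : ℝ → E} (hψ : Integrable ψ) (ξ : ℝ) :
    HasDerivAt (fourierPrimitive ψ) (-(2 * π * Complex.I : ℂ) • 𝓕 ψ ξ) ξ := by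
  have hmeas := aestronglyMeasurable_primitiveKernel_smul hψ.aestronglyMeasurable
  have hint : Integrable fun r => primitiveKernel r ξ • ψ r := by
    refine (hψ.norm.const_mul (2 * π * |ξ|)).mono' (hmeas ξ) (.of_forall fun r => ?_)
    rw [norm_smul]
    gcongr
    simpa using norm_primitiveKernel_le zero_le_one le_rfl r ξ
  have hint' := (integrable_fourierChar_smul hψ ξ).smul (-(2 * π * Complex.I : ℂ))
  have key := hasDerivAt_integral_of_dominated_loc_of_deriv_le
    (F := fun ξ r => primitiveKernel r ξ • ψ r)
    (F' := fun ξ r => -(2 * π * Complex.I : ℂ) • 𝐞 (-(r * ξ)) • ψ r)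
    (bound := fun r => 2 * π * ‖ψ r‖) univ_mem (.of_forall hmeas) hint hint'.aestronglyMeasurable
    (.of_forall fun r ξ _ => ?_) (hψ.norm.const_mul (2 * π)) ?_
  · rw [Real.fourier_real_eq, ← integral_smul]
    exact key.2
  · simp [norm_smul, abs_of_pos pi_pos]
  · filter_upwards [Measure.ae_ne volume 0] with r hr ξ _
    have := (hasDerivAt_primitiveKernel hr ξ).smul_const (ψ r)
    simpa [Circle.smul_def, smul_smul] using this

theorem integrable_primitiveKernel_smul_smul (hδ0 : 0 ≤ δ) (hδ1 : δ ≤ 1) {ψ : ℝ → ℂ} {h : ℝ → E}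
    (hψ : AEStronglyMeasurable ψ) (hh : AEStronglyMeasurable h)
    (hψδ : Integrable fun r => |r| ^ (δ - 1) • ψ r) (hhδ : Integrable fun ξ => |ξ| ^ δ • h ξ) :
    Integrable (fun p : ℝ × ℝ => primitiveKernel p.1 p.2 • ψ p.1 • h p.2)
      (volume.prod volume) := by
  refine ((hψδ.norm.mul_prod hhδ.norm).const_mul (2 * π)).mono'
    (measurable_primitiveKernel.aestronglyMeasurable.smul (hψ.comp_fst.smul hh.comp_snd))
    (.of_forall fun p => ?_)
  calc ‖primitiveKernel p.1 p.2 • ψ p.1 • h p.2‖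
      ≤ 2 * π * |p.1| ^ (δ - 1) * |p.2| ^ δ * (‖ψ p.1‖ * ‖h p.2‖) := by
        rw [norm_smul, norm_smul]
        gcongr
        exact norm_primitiveKernel_le hδ0 hδ1 _ _
    _ = 2 * π * (‖|p.1| ^ (δ - 1) • ψ p.1‖ * ‖|p.2| ^ δ • h p.2‖) := by
        rw [norm_smul, norm_smul, Real.norm_of_nonneg (by positivity),
          Real.norm_of_nonneg (by positivity)]
        ring

theorem integral_smul_regularFourier_eq_integral_fourierPrimitive_smul_deriv [CompleteSpace E]
    (hδ0 : 0 ≤ δ) (hδ1 : δ ≤ 1) {ψ : ℝ → ℂ} {g : ℝ → E} (hψ : Integrable ψ)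
    (hψδ : Integrable fun r => |r| ^ (δ - 1) • ψ r)
    (hg : Integrable (deriv g)) (hgδ : Integrable fun ξ => |ξ| ^ δ • deriv g ξ)
    (hmean : ∫ ξ, deriv g ξ = 0) :
    ∫ r, ψ r • regularFourier g r =
      (2 * π * Complex.I : ℂ)⁻¹ • ∫ ξ, fourierPrimitive ψ ξ • deriv g ξ := by
  have hinner (r : ℝ) : ψ r • regularFourier g r = (2 * π * Complex.I : ℂ)⁻¹ •
      ∫ ξ, primitiveKernel r ξ • ψ r • deriv g ξ := by
    have hsub : 𝓕 (deriv g) r = ∫ ξ, ((𝐞 (-(r * ξ)) : ℂ) - 1) • deriv g ξ := by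
      rw [← sub_zero (𝓕 (deriv g) r), ← hmean, Real.fourier_real_eq,
        ← integral_sub (integrable_fourierChar_smul hg r) hg]
      simp only [sub_smul, one_smul, Circle.smul_def, mul_comm r]
    rw [regularFourier, hsub, smul_comm (ψ r), ← integral_smul, ← integral_smul]
    congr 2 with ξ
    rw [primitiveKernel, smul_assoc, smul_comm (ψ r), smul_comm (ψ r)]
  simp only [hinner]
  rw [integral_smul, integral_integral_swap (integrable_primitiveKernel_smul_smul hδ0 hδ1
    hψ.aestronglyMeasurable hg.aestronglyMeasurable hψδ hgδ)]
  congr 2 with ξ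
  simp only [fourierPrimitive, ← integral_smul_const, smul_eq_mul, smul_smul]

theorem integral_fourier_smul_eq_integral_smul_regularFourier [CompleteSpace E] (hδ0 : 0 ≤ δ)
    (hδ1 : δ ≤ 1) {ψ : ℝ → ℂ} {g : ℝ → E} (hψ : Integrable ψ)
    (hψδ : Integrable fun r => |r| ^ (δ - 1) • ψ r) (hψF : Integrable (𝓕 ψ))
    (hdiff : Differentiable ℝ g) (hg : Integrable (deriv g))
    (hgδ : Integrable fun ξ => |ξ| ^ δ • deriv g ξ) (htop : Tendsto g atTop (𝓝 0))
    (hbot : Tendsto g atBot (𝓝 0)) :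
    ∫ ξ, 𝓕 ψ ξ • g ξ = ∫ r, ψ r • regularFourier g r := by
  have hmean : ∫ ξ, deriv g ξ = 0 := integral_deriv_eq_zero_of_tendsto hdiff hg htop hbot
  have hΦ := hasDerivAt_fourierPrimitive hψ
  have hΦint : Integrable fun ξ => -(2 * π * Complex.I : ℂ) • 𝓕 ψ ξ := hψF.fun_smul _
  have hΦcont : Continuous (fourierPrimitive ψ) :=
    continuous_iff_continuousAt.2 fun ξ => (hΦ ξ).continuousAt
  have hΦbdd := isBigO_one_of_hasDerivAt_of_integrable hΦ hΦint
  have hgbdd := isBigO_one_of_hasDerivAt_of_integrable (fun ξ => (hdiff ξ).hasDerivAt) hg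
  have hboundary {u : Filter ℝ} (hu : Tendsto g u (𝓝 0)) :
      Tendsto (fun ξ => fourierPrimitive ψ ξ • g ξ) u (𝓝 0) := by
    refine ((hΦbdd.mono le_top).smul (isBigO_refl g u)).trans_tendsto ?_
    simpa using hu
  have hint₁ : Integrable fun ξ => fourierPrimitive ψ ξ • deriv g ξ :=
    (hΦbdd.smul (isBigO_refl (deriv g) ⊤)).integrable
      (hΦcont.aestronglyMeasurable.smul hg.aestronglyMeasurable) (by simpa using hg)
  have hint₂ : Integrable fun ξ => (-(2 * π * Complex.I : ℂ) • 𝓕 ψ ξ) • g ξ :=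
    ((isBigO_refl _ ⊤).norm_right.smul hgbdd).integrable (hΦint.aestronglyMeasurable.smul
      hdiff.continuous.aestronglyMeasurable) (by simpa using hΦint.norm)
  have hparts := integral_bilinear_hasDerivAt_right_eq_sub (L := ContinuousLinearMap.lsmul ℝ ℂ)
    (fun ξ _ => hΦ ξ) (fun ξ _ => (hdiff ξ).hasDerivAt) hint₁ hint₂ (hboundary hbot)
    (hboundary htop)
  simp only [ContinuousLinearMap.lsmul_apply] at hparts
  rw [integral_smul_regularFourier_eq_integral_fourierPrimitive_smul_deriv hδ0 hδ1 hψ hψδ hg hgδ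
    hmean, hparts]
  simp only [neg_smul, smul_assoc, integral_neg, integral_smul, sub_zero, zero_sub, neg_neg]
  rw [inv_smul_smul₀ Complex.two_pi_I_ne_zero]

theorem IsSymbol.integral_fourier_schwartzMap_smul [CompleteSpace E] {ε : ℝ} {g : ℝ → E}
    (hε0 : 0 < ε) (hε1 : ε < 1) (hg : IsSymbol 0 (-(1 + ε)) (deriv g)) (hdiff : Differentiable ℝ g)
    (htop : Tendsto g atTop (𝓝 0)) (hbot : Tendsto g atBot (𝓝 0)) (ψ : 𝓢(ℝ, ℂ)) :
    ∫ ξ, 𝓕 (ψ : ℝ → ℂ) ξ • g ξ = ∫ r, ψ r • regularFourier g r := by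
  have hψδ : Integrable fun r => |r| ^ (ε / 2 - 1) • ψ r :=
    integrable_norm_rpow_smul_schwartzMap (by simp) (by simpa using hε0) ψ
  have hψF : Integrable (𝓕 (ψ : ℝ → ℂ)) := by
    rw [← SchwartzMap.fourier_coe]
    exact (𝓕 ψ).integrable
  have hgδ : Integrable fun ξ => |ξ| ^ (ε / 2) • deriv g ξ :=
    hg.integrable_abs_rpow_smul (by linarith) (by linarith)
  exact integral_fourier_smul_eq_integral_smul_regularFourier (by linarith) (by linarith)
    ψ.integrable hψδ hψF hdiff (hg.integrable (by linarith)) hgδ htop hbot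

theorem integral_cexp_smul_eq_integral_fourier_smul (ψ : ℝ → ℂ) (f : ℝ → E) :
    ∫ p : ℝ, ((2 * π : ℝ)⁻¹ • ∫ r : ℝ, Complex.exp (Complex.I * p * r) * ψ r) • f p =
      ∫ ξ, 𝓕 ψ ξ • f (-(2 * π) * ξ) := by
  have hfourier (ξ : ℝ) : 𝓕 ψ ξ =
      ∫ r : ℝ, Complex.exp (Complex.I * (-(2 * π) * ξ : ℝ) * r) * ψ r := by
    rw [Real.fourier_real_eq_integral_exp_smul]
    congr 1 with r
    rw [smul_eq_mul]
    push_cast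
    ring_nf
  simp only [hfourier]
  rw [Measure.integral_comp_mul_left
    (fun p : ℝ => (∫ r : ℝ, Complex.exp (Complex.I * p * r) * ψ r) • f p), ← integral_smul]
  congr 1 with p
  rw [smul_assoc, inv_neg, abs_neg, abs_of_pos (by positivity)]

end Duality

theorem stmt6_general {E : Type*} [NormedAddCommGroup E] [NormedSpace ℂ E] [CompleteSpace E]
    (K : ℕ) (hK : 1 ≤ K) (f : ℝ → E) (Ck : ℕ → ℝ) (ε : ℝ)
    (hε0 : 0 < ε) (hε1 : ε < 1)
    (hf : ContDiff ℝ (K : ℕ∞) f)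
    (htop : Tendsto f atTop (𝓝 0)) (hbot : Tendsto f atBot (𝓝 0))
    (hder : ∀ k : ℕ, 1 ≤ k → k ≤ K → ∀ p : ℝ,
      ‖iteratedDeriv k f p‖ ≤ Ck k * (1 + |p|) ^ (-((k : ℝ) + ε))) :
    ∃ (V : ℝ → E) (Ck' : ℕ → ℝ),
      LocallyIntegrable V ∧
      (∀ ψ : SchwartzMap ℝ ℂ,
        ∫ p : ℝ, ((2 * π : ℝ)⁻¹ • ∫ r : ℝ, Complex.exp (Complex.I * p * r) * ψ r) • f p =
          ∫ r : ℝ, ψ r • V r) ∧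
      ContDiffOn ℝ ((K - 1 : ℕ) : ℕ∞) V {0}ᶜ ∧
      (∀ k : ℕ, 1 ≤ k → k ≤ K → ∀ r : ℝ, r ≠ 0 →
        ‖iteratedDerivWithin (k - 1) V {0}ᶜ r‖ ≤ Ck' k * |r| ^ (ε - (k : ℝ))) := by
  obtain ⟨n, rfl⟩ : ∃ n, K = n + 1 := ⟨K - 1, by omega⟩
  have hf' : IsSymbol n (-(1 + ε)) (deriv f) := by
    refine IsSymbol.deriv_of_norm_iteratedDeriv_le (C := fun j => Ck (j + 1))
      (by exact_mod_cast hf) fun j hj p => ?_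
    convert hder (j + 1) (by omega) (by omega) p using 3
    push_cast
    ring
  have hc : -(2 * π) < 0 := by linarith [two_pi_pos]
  let g : ℝ → E := fun ξ => f (-(2 * π) * ξ)
  have hg : IsSymbol n (-(1 + ε)) (deriv g) := hf'.deriv_comp_mul_left hc.ne
  have hdiff : Differentiable ℝ g := (hf.differentiable (by simp)).comp (by fun_prop)
  have hgtop : Tendsto g atTop (𝓝 0) := hbot.comp (tendsto_id.const_mul_atTop_of_neg hc)
  have hgbot : Tendsto g atBot (𝓝 0) := htop.comp (tendsto_id.const_mul_atBot_of_neg hc)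
  have hmean : ∫ ξ, deriv g ξ = 0 :=
    integral_deriv_eq_zero_of_tendsto hdiff (hg.integrable (by linarith)) hgtop hgbot
  obtain ⟨C, hC⟩ := hg.exists_norm_iteratedDerivWithin_regularFourier_le hε0 hε1 hmean
  refine ⟨regularFourier g, fun k => C (k - 1), hg.locallyIntegrable_regularFourier hε0 hε1 hmean,
    fun ψ => ?_, hg.contDiffOn_regularFourier (by linarith), fun k hk hkn r hr => ?_⟩
  · rw [integral_cexp_smul_eq_integral_fourier_smul]
    exact (hg.of_le n.zero_le).integral_fourier_schwartzMap_smul hε0 hε1 hdiff hgtop hgbot ψ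
  · convert hC (k - 1) (by omega) r hr using 3
    push_cast [hk]
    ring

/-- higher-order version. If `f ∈ C^K` vanishes at `±∞` with
`|f^{(k)}(p)| ≤ C_k (1+|p|)^{-(k+ε)}` for `1 ≤ k ≤ K`, then its distributional inverse
Fourier transform is a regular function `V`, of class `C^{K-1}` off the origin, with
`|V^{(k-1)}(r)| ≤ C'_k |r|^{ε-k}` for `1 ≤ k ≤ K`. -/
theorem stmt6 (K : ℕ) (hK : 1 ≤ K) (f : ℝ → ℂ) (Ck : ℕ → ℝ) (ε : ℝ)
    (hε0 : 0 < ε) (hε1 : ε < 1)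
    (hf : ContDiff ℝ (K : ℕ∞) f)
    (htop : Tendsto f atTop (𝓝 0)) (hbot : Tendsto f atBot (𝓝 0))
    (hder : ∀ k : ℕ, 1 ≤ k → k ≤ K → ∀ p : ℝ,
      ‖iteratedDeriv k f p‖ ≤ Ck k * (1 + |p|) ^ (-((k : ℝ) + ε))) :
    ∃ (V : ℝ → ℂ) (Ck' : ℕ → ℝ),
      LocallyIntegrable V ∧
      (∀ ψ : SchwartzMap ℝ ℂ,
        ∫ p : ℝ, f p * ((2 * π : ℝ)⁻¹ • ∫ r : ℝ, Complex.exp (Complex.I * p * r) * ψ r) =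
          ∫ r : ℝ, V r * ψ r) ∧
      ContDiffOn ℝ ((K - 1 : ℕ) : ℕ∞) V {0}ᶜ ∧
      (∀ k : ℕ, 1 ≤ k → k ≤ K → ∀ r : ℝ, r ≠ 0 →
        ‖iteratedDerivWithin (k - 1) V {0}ᶜ r‖ ≤ Ck' k * |r| ^ (ε - (k : ℝ))) := by
  simpa only [smul_eq_mul, mul_comm] using
    stmt6_general K hK f Ck ε hε0 hε1 hf htop hbot hder
end
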